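/- In the Gaussian sequence model, for every q ≥ 1 there exists a constant C_q > 0 depending only on q such that for all σ > 0, a > 0, τ > 0, all integers 1 ≤ s ≤ p, and every β ∈ Ω^p_{s,a}, the hard-thresholding estimator T defined by T_j(Y) = Y_j·1{|Y_j| ≥ τ} satisfies: E_β‖T(Y) − β‖_q^q ≤ C_q [ s σ_q^q + (τ^q + σ^q)·( p·P(σε ≥ τ) + s·P(σε ≥ (a − τ)_+) ) ], where ε is a standard Gaussian random variable and x_+ = max(x, 0). -/

import Mathlib

/-!
The loss is a sum over coordinates, so it suffices to bound the risk of thresholding one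
Gaussian observation `b + σ ε`.

If `b = 0`, the risk is `σ ^ q · E[|ε| ^ q ; |ε| ≥ t]` with `t = τ / σ`, and it has to be compared
with `(t ^ q + 1) · P(ε ≥ t)`. Split `x ^ q ≤ 2 ^ q (t ^ q + (x - t) ^ q)` for `x ≥ t`. The part
`x ≤ t + 1` of the second term contributes at most `P(ε ≥ t)`. For `x ≥ t + 1`, the Gaussian density
satisfies `φ x ≤ K · P(ε ≥ t) · φ (x - t)` (`gaussianPDF_tail_le`), so that part is at most
`K · P(ε ≥ t) · E|ε| ^ q` by translation invariance of Lebesgue measure.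

If `|b| ≥ a`, then either the observation is kept and the loss is `|σ ε| ^ q`, or
`|b + σ ε| < τ`. In the latter case `|b| ≤ τ + |σ ε|`, which bounds the loss by
`2 ^ q (τ ^ q + |σ ε| ^ q)` and also gives `|σ ε| ≥ (a - τ)₊`, an event of probability at most
`2 P(σ ε ≥ (a - τ)₊)` by symmetry.

These bounds are `coordRisk_zero_le` and `coordRisk_ne_zero_le`; at most `s` coordinates are of the
second kind.
-/

open MeasureTheory ProbabilityTheory Filter
open scoped ENNReal NNReal BigOperators Classical

noncomputable section

/-- The Gaussian distribution `N(m, σ²)` on `ℝ`. -/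
def gauss (m σ : ℝ) : Measure ℝ := gaussianReal m ⟨σ ^ 2, sq_nonneg σ⟩

/-- The standard Gaussian distribution on `ℝ`. -/
def stdG : Measure ℝ := gaussianReal 0 1

/-- The Gaussian sequence model: `Y` has independent coordinates `Y j ~ N(β j, σ²)`. -/
def seqModel (p : ℕ) (σ : ℝ) (β : Fin p → ℝ) : Measure (Fin p → ℝ) :=
  Measure.pi fun j => gauss (β j) σ

/-- `Ω^p_{s,a}`: `s`-sparse vectors with nonzero coordinates at least `a` in absolute value. -/
def sparseSet (p s : ℕ) (a : ℝ) : Set (Fin p → ℝ) :=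
  {β | (Finset.univ.filter fun i => β i ≠ 0).card ≤ s ∧ ∀ i, β i ≠ 0 → a ≤ |β i|}

/-- The risk `E_β ‖est(Y) − β‖_q^q` in the Gaussian sequence model. -/
def seqRisk (p : ℕ) (σ q : ℝ) (est : (Fin p → ℝ) → Fin p → ℝ) (β : Fin p → ℝ) : ℝ≥0∞ :=
  ∫⁻ y, ENNReal.ofReal (∑ j, |est y j - β j| ^ q) ∂(seqModel p σ β)

/-- The maximal risk over `Ω^p_{s,a}`. -/
def maxRisk (p s : ℕ) (σ q a : ℝ) (est : (Fin p → ℝ) → Fin p → ℝ) : ℝ≥0∞ :=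
  ⨆ β ∈ sparseSet p s a, seqRisk p σ q est β

/-- The minimax risk over `Ω^p_{s,a}` in the Gaussian sequence model. -/
def minimax (p s : ℕ) (σ q a : ℝ) : ℝ≥0∞ :=
  ⨅ (est : (Fin p → ℝ) → Fin p → ℝ) (_ : Measurable est), maxRisk p s σ q a est

/-- `σ_q^q = E|η|^q` where `η ~ N(0, σ²)`. -/
def sigmaqq (σ q : ℝ) : ℝ := ∫ x, |x| ^ q ∂(gauss 0 σ)

/-- `P(σ ε > t)` for a standard Gaussian `ε`. -/
def PgtS (σ t : ℝ) : ℝ := (stdG {x | t < σ * x}).toReal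

/-- `P(σ ε ≥ t)` for a standard Gaussian `ε`. -/
def PgeS (σ t : ℝ) : ℝ := (stdG {x | t ≤ σ * x}).toReal

/-- The threshold `t(a) = a/2 + σ² log(p/s − 1)/a`. -/
def tFun (p s : ℕ) (σ a : ℝ) : ℝ := a / 2 + σ ^ 2 * Real.log ((p : ℝ) / s - 1) / a

/-- `t* = σ √(2 log(p/s − 1))`. -/
def tStar (p s : ℕ) (σ : ℝ) : ℝ := σ * Real.sqrt (2 * Real.log ((p : ℝ) / s - 1))

/-- `ψ(p,s,a,σ) = (p−s) P(σε > t(a)) + s P(σε > a − t(a))`. -/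
def psi (p s : ℕ) (σ a : ℝ) : ℝ :=
  ((p : ℝ) - s) * PgtS σ (tFun p s σ a) + s * PgtS σ (a - tFun p s σ a)

/-- `ψ₊(p,s,a,σ) = (p−s) P(σε > t(a)) + s P(σε > (a − t(a))₊)`. -/
def psiPlus (p s : ℕ) (σ a : ℝ) : ℝ :=
  ((p : ℝ) - s) * PgtS σ (tFun p s σ a) + s * PgtS σ (max (a - tFun p s σ a) 0)

/-- The hard-thresholding estimator at level `τ`. -/
def hardThr (p : ℕ) (τ : ℝ) : (Fin p → ℝ) → Fin p → ℝ :=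
  fun y j => if τ ≤ |y j| then y j else 0

/-! ### Moments and scaling of the Gaussian distribution -/

/-- Convexity-type inequality with the non-optimal constant `2 ^ q`. -/
lemma add_rpow_le_two {q x y : ℝ} (hq : 1 ≤ q) (hx : 0 ≤ x) (hy : 0 ≤ y) :
    (x + y) ^ q ≤ 2 ^ q * (x ^ q + y ^ q) := by
  have hm : 0 ≤ max x y := le_max_of_le_left hx
  have h1 : (x + y) ^ q ≤ (2 * max x y) ^ q := by
    apply Real.rpow_le_rpow (by positivity) _ (by linarith)
    linarith [le_max_left x y, le_max_right x y]
  rw [Real.mul_rpow (by norm_num) hm] at h1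
  refine h1.trans (mul_le_mul_of_nonneg_left ?_ (by positivity))
  have h2 : 0 ≤ x ^ q := by positivity
  have h3 : 0 ≤ y ^ q := by positivity
  rcases max_cases x y with h | h <;> rw [h.1] <;> linarith

instance : IsProbabilityMeasure stdG := by unfold stdG; infer_instance

/-- The `q`-th absolute moment of the standard Gaussian distribution. -/
def gaussMoment (q : ℝ) : ℝ := ∫ x, |x| ^ q ∂stdG

lemma gaussMoment_nonneg (q : ℝ) : 0 ≤ gaussMoment q :=
  integral_nonneg fun x => by positivity

lemma lintegral_abs_rpow {q : ℝ} (hq : 1 ≤ q) :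
    ∫⁻ x, ENNReal.ofReal (|x| ^ q) ∂stdG = ENNReal.ofReal (gaussMoment q) := by
  refine (ofReal_integral_eq_lintegral_ofReal ?_ (ae_of_all _ fun x => by positivity)).symm
  have h : MemLp (id : ℝ → ℝ) (ENNReal.ofReal q) stdG := by
    have := memLp_id_gaussianReal (μ := 0) (v := 1) (Real.toNNReal q)
    exact this
  have h2 := h.integrable_norm_rpow (by simp; linarith) (by simp)
  simpa [ENNReal.toReal_ofReal (by linarith : 0 ≤ q)] using h2

lemma stdG_eq : stdG = volume.withDensity (gaussianPDF 0 1) :=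
  gaussianReal_of_var_ne_zero _ one_ne_zero

lemma gauss_eq (m σ : ℝ) : gauss m σ = gaussianReal m (NNReal.mk (σ ^ 2) (sq_nonneg σ)) := rfl

lemma gauss_eq_map (m σ : ℝ) :
    gauss m σ = stdG.map (fun x => m + σ * x) := by
  have h1 : stdG.map (fun x => σ * x) = gauss 0 σ := by
    rw [gauss_eq, stdG, gaussianReal_map_const_mul]
    simp
  have h2 : (gauss 0 σ).map (fun x => m + x) = gauss m σ := by
    rw [gauss_eq, gauss_eq, gaussianReal_map_const_add, zero_add]
  rw [← h2, ← h1, Measure.map_map (by fun_prop) (by fun_prop)]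
  rfl

lemma sigmaqq_eq {σ q : ℝ} (hσ : 0 < σ) : sigmaqq σ q = σ ^ q * gaussMoment q := by
  unfold sigmaqq gaussMoment
  rw [gauss_eq_map 0 σ, integral_map (by fun_prop)
    (Measurable.aestronglyMeasurable (by fun_prop)), ← integral_const_mul]
  refine integral_congr_ae (ae_of_all _ fun x => ?_)
  simp only [zero_add]
  rw [abs_mul, abs_of_pos hσ, Real.mul_rpow hσ.le (abs_nonneg _)]

lemma stdG_symm (f : ℝ → ℝ≥0∞) (hf : Measurable f) :
    ∫⁻ x, f (-x) ∂stdG = ∫⁻ x, f x ∂stdG := by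
  have h : stdG.map (fun x => -x) = stdG := by
    unfold stdG; rw [gaussianReal_map_neg]; simp
  conv_rhs => rw [← h]
  rw [lintegral_map hf (by fun_prop)]

/-! ### Truncated Gaussian moments -/

/-- The constant in the density comparison `gaussianPDF_tail_le`. -/
def tailConst : ℝ := √(2 * Real.pi) * Real.exp (1 / 2)

lemma tailConst_pos : 0 < tailConst := by unfold tailConst; positivity

/-- Beyond `t + 1` the Gaussian density is dominated by its translate to `t`, times the
Gaussian tail at `t`: the tail is at least `φ (t + 1)`, the smallest density on `[t, t + 1]`. -/
lemma gaussianPDF_tail_le {t x : ℝ} (ht : 0 ≤ t) (hx : t + 1 ≤ x) :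
    gaussianPDF 0 1 x ≤
      ENNReal.ofReal tailConst * stdG (Set.Ici t) * gaussianPDF 0 1 (x - t) := by
  have h1 : gaussianPDF 0 1 (t + 1) ≤ stdG (Set.Ici t) := by
    calc gaussianPDF 0 1 (t + 1) = ∫⁻ _ in Set.Icc t (t + 1), gaussianPDF 0 1 (t + 1) := by simp
      _ ≤ ∫⁻ y in Set.Icc t (t + 1), gaussianPDF 0 1 y := by
          refine setLIntegral_mono (measurable_gaussianPDF 0 1) fun y hy => ?_
          refine ENNReal.ofReal_le_ofReal ?_
          simp only [gaussianPDFReal, sub_zero]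
          gcongr
          · linarith [hy.1]
          · exact hy.2
      _ = stdG (Set.Icc t (t + 1)) := by
          rw [stdG_eq, withDensity_apply _ measurableSet_Icc]
      _ ≤ stdG (Set.Ici t) := measure_mono Set.Icc_subset_Ici_self
  refine le_trans ?_ (mul_le_mul_left (mul_le_mul_right h1 _) _)
  simp only [gaussianPDF]
  rw [← ENNReal.ofReal_mul tailConst_pos.le, ← ENNReal.ofReal_mul
    (mul_nonneg tailConst_pos.le (gaussianPDFReal_nonneg _ _ _))]
  refine ENNReal.ofReal_le_ofReal ?_
  simp only [gaussianPDFReal, sub_zero, tailConst, NNReal.coe_one, mul_one]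
  set c := √(2 * Real.pi) with hc
  have hc0 : 0 < c := by positivity
  have : c * Real.exp (1 / 2) * (c⁻¹ * Real.exp (-(t + 1) ^ 2 / 2)) *
      (c⁻¹ * Real.exp (-(x - t) ^ 2 / 2)) =
      c⁻¹ * Real.exp (1 / 2 + -(t + 1) ^ 2 / 2 + -(x - t) ^ 2 / 2) := by
    rw [Real.exp_add, Real.exp_add]; field_simp
  rw [this]
  gcongr
  nlinarith [mul_nonneg ht (sub_nonneg.2 hx)]

/-- The constant in the truncated moment bounds. -/
def momConst (q : ℝ) : ℝ := 2 ^ q * (1 + tailConst * gaussMoment q)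

lemma momConst_pos (q : ℝ) : 0 < momConst q := by
  have := mul_nonneg tailConst_pos.le (gaussMoment_nonneg q)
  unfold momConst
  positivity

/-- The one-sided truncated moment bound, obtained from `gaussianPDF_tail_le`. -/
lemma setLIntegral_Ici_rpow_le {q t : ℝ} (hq : 1 ≤ q) (ht : 0 ≤ t) :
    ∫⁻ x in Set.Ici t, ENNReal.ofReal (|x| ^ q) ∂stdG ≤
      ENNReal.ofReal (momConst q * (t ^ q + 1)) * stdG (Set.Ici t) := by
  set P := stdG (Set.Ici t) with hP
  have hφ := measurable_gaussianPDF 0 1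
  have htq : 0 ≤ t ^ q := by positivity
  have h2q : (0 : ℝ) ≤ 2 ^ q := by positivity
  have hM := gaussMoment_nonneg q
  have hK := tailConst_pos
  have hpt : ∀ x ∈ Set.Ici t, (gaussianPDF 0 1 * fun x => ENNReal.ofReal (|x| ^ q)) x ≤
      ENNReal.ofReal (2 ^ q * (t ^ q + 1)) * gaussianPDF 0 1 x +
      ENNReal.ofReal (2 ^ q * tailConst) * P *
        (gaussianPDF 0 1 (x - t) * ENNReal.ofReal (|x - t| ^ q)) := by
    intro x hx
    have hxt : 0 ≤ x - t := sub_nonneg.2 hx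
    have hx0 : 0 ≤ x := le_trans ht hx
    have hsplit : |x| ^ q ≤ 2 ^ q * (t ^ q + |x - t| ^ q) := by
      rw [abs_of_nonneg hx0, abs_of_nonneg hxt]
      simpa using add_rpow_le_two hq ht hxt
    simp only [Pi.mul_apply]
    rcases le_total x (t + 1) with h | h
    · refine le_add_right ?_
      rw [mul_comm]
      gcongr
      refine hsplit.trans ?_
      gcongr
      refine Real.rpow_le_one (abs_nonneg _) ?_ (by linarith)
      rw [abs_of_nonneg hxt]; linarith
    · calc gaussianPDF 0 1 x * ENNReal.ofReal (|x| ^ q)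
          ≤ gaussianPDF 0 1 x * ENNReal.ofReal (2 ^ q * t ^ q + 2 ^ q * |x - t| ^ q) := by
            gcongr; linarith
        _ = ENNReal.ofReal (2 ^ q * t ^ q) * gaussianPDF 0 1 x +
              ENNReal.ofReal (2 ^ q * |x - t| ^ q) * gaussianPDF 0 1 x := by
            rw [ENNReal.ofReal_add (by positivity) (by positivity)]; ring
        _ ≤ ENNReal.ofReal (2 ^ q * (t ^ q + 1)) * gaussianPDF 0 1 x +
              ENNReal.ofReal (2 ^ q * |x - t| ^ q) *
                (ENNReal.ofReal tailConst * P * gaussianPDF 0 1 (x - t)) := by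
            gcongr
            · linarith
            · exact gaussianPDF_tail_le ht h
        _ = _ := by
            rw [ENNReal.ofReal_mul h2q (q := |x - t| ^ q), ENNReal.ofReal_mul h2q (q := tailConst)]
            ring
  have hshift : ∫⁻ x, gaussianPDF 0 1 (x - t) * ENNReal.ofReal (|x - t| ^ q) =
      ENNReal.ofReal (gaussMoment q) := by
    rw [lintegral_sub_right_eq_self (fun x => gaussianPDF 0 1 x * ENNReal.ofReal (|x| ^ q)) t,
      ← lintegral_abs_rpow hq, stdG_eq,
      lintegral_withDensity_eq_lintegral_mul _ hφ (by fun_prop)]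
    rfl
  calc ∫⁻ x in Set.Ici t, ENNReal.ofReal (|x| ^ q) ∂stdG
      = ∫⁻ x in Set.Ici t, (gaussianPDF 0 1 * fun x => ENNReal.ofReal (|x| ^ q)) x := by
        rw [stdG_eq, restrict_withDensity measurableSet_Ici,
          lintegral_withDensity_eq_lintegral_mul _ hφ (by fun_prop)]
    _ ≤ ∫⁻ x in Set.Ici t, (ENNReal.ofReal (2 ^ q * (t ^ q + 1)) * gaussianPDF 0 1 x +
      ENNReal.ofReal (2 ^ q * tailConst) * P *
        (gaussianPDF 0 1 (x - t) * ENNReal.ofReal (|x - t| ^ q))) :=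
        setLIntegral_mono (by fun_prop) hpt
    _ = ENNReal.ofReal (2 ^ q * (t ^ q + 1)) * P + ENNReal.ofReal (2 ^ q * tailConst) * P *
        ∫⁻ x in Set.Ici t, (gaussianPDF 0 1 (x - t) * ENNReal.ofReal (|x - t| ^ q)) := by
        rw [lintegral_add_left (by fun_prop), lintegral_const_mul _ hφ,
          lintegral_const_mul _ (by fun_prop), hP, stdG_eq, withDensity_apply _ measurableSet_Ici]
    _ ≤ ENNReal.ofReal (2 ^ q * (t ^ q + 1)) * P + ENNReal.ofReal (2 ^ q * tailConst) * P *
        ENNReal.ofReal (gaussMoment q) := by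
        rw [← hshift]
        gcongr
        exact Measure.restrict_le_self
    _ = ENNReal.ofReal (2 ^ q * (t ^ q + 1) + 2 ^ q * tailConst * gaussMoment q) * P := by
        rw [ENNReal.ofReal_add (by positivity) (by positivity),
          ENNReal.ofReal_mul (q := gaussMoment q) (by positivity)]
        ring
    _ ≤ _ := by
        gcongr
        unfold momConst
        have : 0 ≤ 2 ^ q * tailConst * gaussMoment q * t ^ q := by positivity
        nlinarith

/-- The two-sided truncated moment bound, by symmetry of the Gaussian distribution. -/
lemma lintegral_trunc_le {q t : ℝ} (hq : 1 ≤ q) (ht : 0 ≤ t) :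
    ∫⁻ x in {x | t ≤ |x|}, ENNReal.ofReal (|x| ^ q) ∂stdG ≤
      ENNReal.ofReal (2 * momConst q * (t ^ q + 1)) * stdG (Set.Ici t) := by
  have hset : {x : ℝ | t ≤ |x|} = Set.Ici t ∪ Set.Iic (-t) := by
    ext x; simp [le_abs, le_neg]
  have hneg : ∫⁻ x in Set.Iic (-t), ENNReal.ofReal (|x| ^ q) ∂stdG =
      ∫⁻ x in Set.Ici t, ENNReal.ofReal (|x| ^ q) ∂stdG := by
    rw [← lintegral_indicator measurableSet_Iic, ← lintegral_indicator measurableSet_Ici,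
      ← stdG_symm _ (Measurable.indicator (by fun_prop) measurableSet_Iic)]
    refine lintegral_congr fun x => ?_
    simp [Set.indicator, abs_neg]
  have h := setLIntegral_Ici_rpow_le hq ht
  rw [hset]
  refine (lintegral_union_le _ _ _).trans ?_
  rw [hneg, ← two_mul]
  refine (mul_le_mul_right h _).trans_eq ?_
  rw [mul_assoc 2 (momConst q), ENNReal.ofReal_mul (by norm_num : (0 : ℝ) ≤ 2)]
  simp [mul_assoc]

lemma stdG_two_sided (t : ℝ) : stdG {x | t ≤ |x|} ≤ 2 * stdG (Set.Ici t) := by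
  have hset : {x : ℝ | t ≤ |x|} = Set.Ici t ∪ Set.Iic (-t) := by
    ext x; simp [le_abs, le_neg]
  have hneg : stdG (Set.Iic (-t)) = stdG (Set.Ici t) := by
    rw [← lintegral_indicator_one measurableSet_Iic, ← lintegral_indicator_one measurableSet_Ici,
      ← stdG_symm _ (Measurable.indicator (by fun_prop) measurableSet_Iic)]
    refine lintegral_congr fun x => ?_
    simp [Set.indicator]
  rw [hset, two_mul]
  exact (measure_union_le _ _).trans_eq (by rw [hneg])

lemma PgeS_nonneg (σ t : ℝ) : 0 ≤ PgeS σ t := ENNReal.toReal_nonneg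

lemma ofReal_PgeS {σ : ℝ} (hσ : 0 < σ) (t : ℝ) :
    ENNReal.ofReal (PgeS σ t) = stdG (Set.Ici (t / σ)) := by
  unfold PgeS
  rw [ENNReal.ofReal_toReal (measure_ne_top _ _)]
  congr 1
  ext x
  simp [div_le_iff₀ hσ, mul_comm]

/-! ### One-coordinate risk -/

/-- The risk of hard thresholding one observation of mean `b`, written as `b + σ ε` with `ε`
standard Gaussian. -/
def coordRisk (q σ τ b : ℝ) : ℝ≥0∞ :=
  ∫⁻ x, ENNReal.ofReal (|(if τ ≤ |b + σ * x| then b + σ * x else 0) - b| ^ q) ∂stdG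

lemma coordRisk_zero_le {q σ τ : ℝ} (hq : 1 ≤ q) (hσ : 0 < σ) (hτ : 0 < τ) :
    coordRisk q σ τ 0 ≤
      ENNReal.ofReal (2 * momConst q * ((τ ^ q + σ ^ q) * PgeS σ τ)) := by
  have hmc := momConst_pos q
  have hσq : 0 < σ ^ q := by positivity
  have hms : MeasurableSet {x : ℝ | τ / σ ≤ |x|} := measurableSet_le (by fun_prop) (by fun_prop)
  have h1 : coordRisk q σ τ 0 =
      ENNReal.ofReal (σ ^ q) * ∫⁻ x in {x | τ / σ ≤ |x|}, ENNReal.ofReal (|x| ^ q) ∂stdG := by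
    rw [← lintegral_indicator hms,
      ← lintegral_const_mul _ (Measurable.indicator (by fun_prop) hms)]
    refine lintegral_congr fun x => ?_
    have hq0 : q ≠ 0 := by linarith
    by_cases h : τ / σ ≤ |x|
    · have h' : τ ≤ |σ * x| := by rwa [abs_mul, abs_of_pos hσ, mul_comm, ← div_le_iff₀ hσ]
      simp only [zero_add, sub_zero, if_pos h', Set.indicator, Set.mem_ofPred_eq, if_pos h]
      rw [abs_mul, abs_of_pos hσ, Real.mul_rpow hσ.le (abs_nonneg _), ENNReal.ofReal_mul hσq.le]
    · have h' : ¬ τ ≤ |σ * x| := by rwa [abs_mul, abs_of_pos hσ, mul_comm, ← div_le_iff₀ hσ]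
      simp only [zero_add, sub_zero, if_neg h', Set.indicator, Set.mem_ofPred_eq, if_neg h]
      simp [Real.zero_rpow hq0]
  rw [h1]
  refine (mul_le_mul_right (lintegral_trunc_le hq (by positivity)) _).trans_eq ?_
  rw [← ofReal_PgeS hσ, ← ENNReal.ofReal_mul (by positivity), ← ENNReal.ofReal_mul hσq.le,
    Real.div_rpow hτ.le hσ.le]
  congr 1
  field_simp

lemma coordRisk_ne_zero_le {q σ τ a b : ℝ} (hq : 1 ≤ q) (hσ : 0 < σ) (hτ : 0 < τ)
    (hb : a ≤ |b|) :
    coordRisk q σ τ b ≤ ENNReal.ofReal ((1 + 2 ^ q) * sigmaqq σ q +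
      2 ^ q * 2 * (τ ^ q * PgeS σ (max (a - τ) 0))) := by
  set m := max (a - τ) 0 / σ with hm
  have hM := gaussMoment_nonneg q
  have hP := PgeS_nonneg σ (max (a - τ) 0)
  have hms : MeasurableSet {x : ℝ | m ≤ |x|} := measurableSet_le (by fun_prop) (by fun_prop)
  -- Below the threshold, `|b| ≤ τ + |σ x|` both controls the loss and forces the noise to be large.
  have hpt : ∀ x, ENNReal.ofReal (|(if τ ≤ |b + σ * x| then b + σ * x else 0) - b| ^ q) ≤
      ENNReal.ofReal ((1 + 2 ^ q) * σ ^ q) * ENNReal.ofReal (|x| ^ q) +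
        ENNReal.ofReal (2 ^ q * τ ^ q) * Set.indicator {x : ℝ | m ≤ |x|} 1 x := by
    intro x
    have habs : |σ * x| ^ q = σ ^ q * |x| ^ q := by
      rw [abs_mul, abs_of_pos hσ, Real.mul_rpow hσ.le (abs_nonneg _)]
    rw [← ENNReal.ofReal_mul (by positivity)]
    have h0 : 0 ≤ 2 ^ q * (σ ^ q * |x| ^ q) := by positivity
    have h0' : 0 ≤ σ ^ q * |x| ^ q := by positivity
    split_ifs with h
    · refine le_add_right (ENNReal.ofReal_le_ofReal ?_)
      rw [add_sub_cancel_left, habs]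
      linarith
    · have hbx : |b| ≤ τ + |σ * x| := by
        have := abs_sub (b + σ * x) (σ * x)
        rw [add_sub_cancel_right] at this
        linarith
      have hmem : m ≤ |x| := by
        rw [hm, div_le_iff₀ hσ, show |x| * σ = |σ * x| by rw [abs_mul, abs_of_pos hσ, mul_comm]]
        exact max_le (by linarith) (abs_nonneg _)
      have hmem' : x ∈ {x : ℝ | m ≤ |x|} := hmem
      rw [Set.indicator_of_mem hmem', Pi.one_apply, mul_one,
        ← ENNReal.ofReal_add (by positivity) (by positivity)]
      refine ENNReal.ofReal_le_ofReal ?_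
      rw [zero_sub, abs_neg]
      have h1 : |b| ^ q ≤ (τ + |σ * x|) ^ q :=
        Real.rpow_le_rpow (abs_nonneg _) hbx (by linarith)
      have h2 := add_rpow_le_two hq hτ.le (abs_nonneg (σ * x))
      rw [habs] at h2
      linarith
  calc coordRisk q σ τ b
      ≤ ∫⁻ x, (ENNReal.ofReal ((1 + 2 ^ q) * σ ^ q) * ENNReal.ofReal (|x| ^ q) +
        ENNReal.ofReal (2 ^ q * τ ^ q) * Set.indicator {x : ℝ | m ≤ |x|} 1 x) ∂stdG :=
        lintegral_mono hpt
    _ = ENNReal.ofReal ((1 + 2 ^ q) * σ ^ q) * ENNReal.ofReal (gaussMoment q) +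
        ENNReal.ofReal (2 ^ q * τ ^ q) * stdG {x : ℝ | m ≤ |x|} := by
        rw [lintegral_add_left (by fun_prop), lintegral_const_mul _ (by fun_prop),
          lintegral_const_mul _ (Measurable.indicator measurable_one hms),
          lintegral_indicator_one hms, lintegral_abs_rpow hq]
    _ ≤ ENNReal.ofReal ((1 + 2 ^ q) * σ ^ q) * ENNReal.ofReal (gaussMoment q) +
        ENNReal.ofReal (2 ^ q * τ ^ q) * (2 * ENNReal.ofReal (PgeS σ (max (a - τ) 0))) := by
        rw [ofReal_PgeS hσ]
        gcongr
        exact stdG_two_sided m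
    _ = _ := by
        rw [sigmaqq_eq hσ, ← ENNReal.ofReal_ofNat 2, ← ENNReal.ofReal_mul (by positivity),
          ← ENNReal.ofReal_mul (by positivity), ← ENNReal.ofReal_mul (by positivity),
          ← ENNReal.ofReal_add (by positivity) (by positivity)]
        congr 1
        ring

/-! ### Summation over coordinates -/

/-- The loss is additive over coordinates, so the risk only involves the marginal laws. -/
lemma seqRisk_hardThr (p : ℕ) (σ q τ : ℝ) (β : Fin p → ℝ) :
    seqRisk p σ q (hardThr p τ) β = ∑ j, coordRisk q σ τ (β j) := by
  have : ∀ j, IsProbabilityMeasure (gauss (β j) σ) := fun j => by rw [gauss_eq]; infer_instance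
  have hmeas : ∀ b : ℝ,
      Measurable fun y : ℝ => ENNReal.ofReal (|(if τ ≤ |y| then y else 0) - b| ^ q) := by
    intro b
    have : Measurable fun y : ℝ => if τ ≤ |y| then y else 0 :=
      Measurable.ite (measurableSet_le (by fun_prop) (by fun_prop)) measurable_id measurable_const
    fun_prop
  unfold seqRisk
  have h1 : ∀ y, ENNReal.ofReal (∑ j, |hardThr p τ y j - β j| ^ q) =
      ∑ j, ENNReal.ofReal (|(if τ ≤ |y j| then y j else 0) - β j| ^ q) := fun y =>
    ENNReal.ofReal_sum_of_nonneg fun j _ => by positivity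
  simp_rw [h1]
  have h3 : ∀ j, Measurable fun y : Fin p → ℝ =>
      ENNReal.ofReal (|(if τ ≤ |y j| then y j else 0) - β j| ^ q) :=
    fun j => (hmeas (β j)).comp (measurable_pi_apply j)
  rw [lintegral_finsetSum _ fun j _ => h3 j]
  refine Finset.sum_congr rfl fun j _ => ?_
  have hmp := measurePreserving_eval (fun j => gauss (β j) σ) j
  have h2 := hmp.lintegral_comp (hmeas (β j))
  simp only [Function.eval] at h2
  rw [seqModel, h2, gauss_eq_map _ σ, lintegral_map (hmeas (β j)) (by fun_prop)]
  rfl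

/-- Oracle inequality for the hard-thresholding estimator at an arbitrary level `τ`. -/
theorem stmt_15 (q : ℝ) (hq : 1 ≤ q) :
    ∃ C : ℝ, 0 < C ∧ ∀ (σ a τ : ℝ) (s p : ℕ), 0 < σ → 0 < a → 0 < τ →
      1 ≤ s → s ≤ p → ∀ β ∈ sparseSet p s a,
      seqRisk p σ q (hardThr p τ) β
        ≤ ENNReal.ofReal (C * ((s : ℝ) * sigmaqq σ q +
            (τ ^ q + σ ^ q) *
              ((p : ℝ) * PgeS σ τ + (s : ℝ) * PgeS σ (max (a - τ) 0)))) := by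
  have hmc := momConst_pos q
  have h2q : (0 : ℝ) < 2 ^ q := by positivity
  refine ⟨2 * momConst q + (1 + 2 ^ q * 2), by positivity, ?_⟩
  intro σ a τ s p hσ _ hτ _ _ β hβ
  set C := 2 * momConst q + (1 + 2 ^ q * 2) with hC
  have hC0 : 0 ≤ C := by positivity
  have hS : 0 ≤ sigmaqq σ q := by
    rw [sigmaqq_eq hσ]; exact mul_nonneg (by positivity) (gaussMoment_nonneg q)
  have hP1 := PgeS_nonneg σ τ
  have hP2 := PgeS_nonneg σ (max (a - τ) 0)
  have hτq : 0 < τ ^ q := by positivity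
  have hσq : 0 < σ ^ q := by positivity
  set A := C * ((τ ^ q + σ ^ q) * PgeS σ τ) with hA
  set B := C * (sigmaqq σ q + (τ ^ q + σ ^ q) * PgeS σ (max (a - τ) 0)) with hB
  have hA0 : 0 ≤ A := by positivity
  have hB0 : 0 ≤ B := by positivity
  -- Every coordinate is charged `A`, and the at most `s` nonzero ones are charged `B` in addition.
  have hcoord : ∀ j, coordRisk q σ τ (β j) ≤
      ENNReal.ofReal (A + if β j ≠ 0 then B else 0) := by
    intro j
    by_cases hj : β j = 0
    · rw [hj]
      refine (coordRisk_zero_le hq hσ hτ).trans (ENNReal.ofReal_le_ofReal ?_)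
      simp only [ne_eq, not_true_eq_false, if_false, add_zero, hA]
      gcongr
      rw [hC]; linarith
    · refine (coordRisk_ne_zero_le hq hσ hτ (hβ.2 j hj)).trans (ENNReal.ofReal_le_ofReal ?_)
      rw [if_pos hj]
      refine le_trans ?_ (le_add_of_nonneg_left hA0)
      rw [hB, mul_add]
      gcongr
      · rw [hC]; linarith
      · rw [hC]; linarith
      · linarith
  rw [seqRisk_hardThr p σ q τ β]
  refine (Finset.sum_le_sum fun j _ => hcoord j).trans ?_
  rw [← ENNReal.ofReal_sum_of_nonneg fun j _ => by split_ifs <;> positivity]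
  refine ENNReal.ofReal_le_ofReal ?_
  rw [Finset.sum_add_distrib, ← Finset.sum_filter]
  simp only [Finset.sum_const, Finset.card_univ, Fintype.card_fin, nsmul_eq_mul]
  have hcard : ((Finset.univ.filter fun i => β i ≠ 0).card : ℝ) ≤ s := by
    exact_mod_cast hβ.1
  have := mul_le_mul_of_nonneg_right hcard hB0
  calc _ ≤ (p : ℝ) * A + s * B := by linarith
    _ = _ := by rw [hA, hB]; ring

end
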